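/- For any Borel probability measure μ on Q^d and any t > 0, the heat-kernel smoothed measure μ_t = μ * γ_t satisfies W̃₁(μ, μ_t) ≤ √(2dt). -/

import Mathlib

open MeasureTheory Real ENNReal

noncomputable section

/-- The cube `Q^d = (−π, π]^d`. -/
def Qcube (d : ℕ) : Set (Fin d → ℝ) := {x | ∀ i, x i ∈ Set.Ioc (-π) π}

/-- The one-dimensional torus distance on `(−π,π]`. -/
def rhoCircle (s t : ℝ) : ℝ := min |s - t| (2 * π - |s - t|)

/-- The geodesic distance on the torus `Q^d = (−π,π]^d`. -/
def rhoTorus {d : ℕ} (x y : Fin d → ℝ) : ℝ :=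
  Real.sqrt (∑ i, rhoCircle (x i) (y i) ^ 2)

/-- `γ` is a coupling of `μ` and `ν`. -/
def IsCoupling {α : Type*} [MeasurableSpace α]
    (γ : Measure (α × α)) (μ ν : Measure α) : Prop :=
  γ.map Prod.fst = μ ∧ γ.map Prod.snd = ν

/-- Optimal transport cost for a cost function `c`. -/
def transportCost {α : Type*} [MeasurableSpace α] (c : α → α → ℝ)
    (μ ν : Measure α) : ℝ≥0∞ :=
  ⨅ (γ : Measure (α × α)) (_ : IsCoupling γ μ ν),
    ∫⁻ p, ENNReal.ofReal (c p.1 p.2) ∂γ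

/-- Torus Kantorovich distance `W̃₁`. -/
def W1tilde {d : ℕ} (μ ν : Measure (Fin d → ℝ)) : ℝ≥0∞ := transportCost rhoTorus μ ν

/-- Fourier–Stieltjes transform `f_μ(m) = ∫ e^{i⟨m,x⟩} dμ(x)`, `m ∈ ℤ^d`. -/
def fourierStieltjes {d : ℕ} (μ : Measure (Fin d → ℝ)) (m : Fin d → ℤ) : ℂ :=
  ∫ x, Complex.exp (Complex.I * ∑ i, (m i : ℂ) * (x i : ℂ)) ∂μ

/-- A function on `ℝ^d` is `2π`-periodic. -/
def IsPeriodic {d : ℕ} (g : (Fin d → ℝ) → ℝ) : Prop :=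
  ∀ (x : Fin d → ℝ) (m : Fin d → ℤ), g (fun i => x i + 2 * π * m i) = g x

/-!
Modulo `2π` the heat kernel measure is the law of a centred Gaussian vector `G` on `ℝ^d` whose
coordinates have variance `2t`, because the two have the same Fourier coefficients. If `X` has law
`μ` and is independent of `G`, then `(X, X - G mod 2π)` is therefore a coupling of `μ` and `μ_t`.
Its cost is at most `𝔼|G|`, which is at most `(𝔼|G|²)^{1/2} = √(2dt)` by Jensen's inequality.
-/

open ProbabilityTheory UnitAddTorus
open scoped NNReal

section UnitAddTorus

variable {ι : Type*} [Fintype ι] {P P' : Measure (UnitAddTorus ι)}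
  [IsFiniteMeasure P] [IsFiniteMeasure P']

lemma integral_eq_of_mem_span_mFourier
    (h : ∀ m : ι → ℤ, ∫ u, mFourier m u ∂P = ∫ u, mFourier m u ∂P')
    {f : C(UnitAddTorus ι, ℂ)} (hf : f ∈ Submodule.span ℂ (Set.range (mFourier (d := ι)))) :
    ∫ u, f u ∂P = ∫ u, f u ∂P' := by
  have integrable (Q : Measure (UnitAddTorus ι)) [IsFiniteMeasure Q] (g : C(UnitAddTorus ι, ℂ)) :
      Integrable g Q := (BoundedContinuousFunction.mkOfCompact g).integrable Q
  induction hf using Submodule.span_induction with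
  | mem f hf =>
    obtain ⟨m, rfl⟩ := hf
    exact h m
  | zero => simp
  | add f g _ _ hf hg =>
    simp only [ContinuousMap.add_apply]
    rw [integral_add (integrable P f) (integrable P g),
      integral_add (integrable P' f) (integrable P' g), hf, hg]
  | smul a f _ hf =>
    simp only [ContinuousMap.smul_apply]
    rw [integral_smul, integral_smul, hf]

lemma ext_of_integral_mFourier_eq
    (h : ∀ m : ι → ℤ, ∫ u, mFourier m u ∂P = ∫ u, mFourier m u ∂P') : P = P' := by
  refine ext_of_forall_mem_subalgebra_integral_eq_of_pseudoEMetric_complete_countable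
    (A := (mFourierSubalgebra ι).comap (BoundedContinuousFunction.toContinuousMapStarₐ ℂ))
    (fun x y hxy ↦ ?_) (fun g hg ↦ ?_)
  · obtain ⟨_, ⟨f, hf, rfl⟩, hne⟩ := mFourierSubalgebra_separatesPoints hxy
    exact ⟨_, ⟨f, ⟨BoundedContinuousFunction.mkOfCompact f, hf, rfl⟩, rfl⟩, hne⟩
  · have hspan : g.toContinuousMap ∈ Submodule.span ℂ (Set.range (mFourier (d := ι))) := by
      rw [← mFourierSubalgebra_coe]
      exact hg
    exact integral_eq_of_mem_span_mFourier h hspan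

end UnitAddTorus

section TorusProjection

variable {ι : Type*} {d : ℕ}

/-- The quotient map from `ℝ^ι` to the torus `(ℝ/2πℤ)^ι`, rescaled so that the torus is Mathlib's
`UnitAddTorus`, for which Fourier analysis is available. -/
def toTorus (x : ι → ℝ) : UnitAddTorus ι := fun i ↦ (x i / (2 * π) : ℝ)

/-- The right inverse of `toTorus` with values in the cube `(-π, π]^ι`: it represents a measure on
the torus by one on the cube. -/
def torusSection (u : UnitAddTorus ι) : ι → ℝ :=
  fun i ↦ 2 * π * (AddCircle.measurableEquivIoc 1 (-(1 / 2)) (u i) : ℝ)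

lemma continuous_toTorus : Continuous (toTorus (ι := ι)) :=
  continuous_pi fun i ↦ (AddCircle.continuous_mk' 1).comp (by fun_prop)

lemma measurable_toTorus : Measurable (toTorus (ι := ι)) :=
  measurable_pi_lambda _ fun i ↦ AddCircle.measurable_mk'.comp (by fun_prop)

lemma measurable_torusSection : Measurable (torusSection (ι := ι)) :=
  measurable_pi_lambda _ fun i ↦ (measurable_subtype_coe.comp
    ((AddCircle.measurableEquivIoc 1 _).measurable.comp (measurable_pi_apply i))).const_mul _

lemma toTorus_sub (x y : ι → ℝ) : toTorus (x - y) = toTorus x - toTorus y := by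
  ext i
  simp only [toTorus, Pi.sub_apply, sub_div, AddCircle.coe_sub]

lemma continuous_toTorus_sub :
    Continuous fun p : (ι → ℝ) × (ι → ℝ) ↦ toTorus (p.1 - p.2) :=
  continuous_toTorus.comp (by fun_prop)

lemma toTorus_eq_toTorus_iff {x y : ι → ℝ} :
    toTorus x = toTorus y ↔ ∃ k : ι → ℤ, ∀ i, x i = y i + 2 * π * k i := by
  have coord (i : ι) : toTorus x i = toTorus y i ↔ ∃ k : ℤ, x i = y i + 2 * π * k := by
    rw [← sub_eq_zero, toTorus, toTorus, ← AddCircle.coe_sub, AddCircle.coe_eq_zero_iff]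
    refine exists_congr fun k ↦ ?_
    rw [zsmul_one, ← sub_div, _root_.eq_div_iff (by positivity)]
    constructor <;> intro h <;> linarith
  rw [funext_iff, forall_congr' coord, Classical.skolem]

lemma toTorus_torusSection (u : UnitAddTorus ι) : toTorus (torusSection u) = u := by
  ext i
  rw [toTorus, torusSection, mul_div_cancel_left₀ _ (by positivity)]
  exact AddCircle.coe_equivIoc

lemma torusSection_mem_Qcube (u : UnitAddTorus (Fin d)) : torusSection u ∈ Qcube d := by
  intro i
  obtain ⟨hl, hr⟩ := (AddCircle.measurableEquivIoc 1 (-(1 / 2)) (u i)).2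
  constructor <;> rw [torusSection] <;> nlinarith [pi_pos]

lemma torusSection_toTorus {x : Fin d → ℝ} (hx : x ∈ Qcube d) : torusSection (toTorus x) = x := by
  ext i
  have hmem : x i / (2 * π) ∈ Set.Ioc (-(1 / 2) : ℝ) (-(1 / 2) + 1) := by
    rw [Set.mem_Ioc, lt_div_iff₀ (by positivity), div_le_iff₀ (by positivity)]
    constructor <;> linarith [(hx i).1, (hx i).2]
  have hequiv : (AddCircle.measurableEquivIoc 1 (-(1 / 2)) (toTorus x i) : ℝ) = x i / (2 * π) :=
    congrArg Subtype.val (AddCircle.equivIoc_coe_eq hmem)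
  rw [torusSection, hequiv, mul_div_cancel₀ _ (by positivity)]

lemma isPeriodic_comp_toTorus (f : UnitAddTorus (Fin d) → ℝ) :
    IsPeriodic fun x ↦ f (toTorus x) :=
  fun _ k ↦ congrArg f (toTorus_eq_toTorus_iff.2 ⟨k, fun _ ↦ rfl⟩)

lemma mFourier_toTorus [Fintype ι] (m : ι → ℤ) (x : ι → ℝ) :
    mFourier m (toTorus x) = Complex.exp (Complex.I * ∑ i, (m i : ℂ) * (x i : ℂ)) := by
  rw [Finset.mul_sum, Complex.exp_sum]
  refine Finset.prod_congr rfl fun i _ ↦ ?_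
  rw [toTorus, fourier_coe_apply]
  congr 1
  push_cast
  field_simp

lemma map_toTorus_eq_of_fourierStieltjes_eq {μ ν : Measure (Fin d → ℝ)}
    [IsFiniteMeasure μ] [IsFiniteMeasure ν]
    (h : ∀ m, fourierStieltjes μ m = fourierStieltjes ν m) : μ.map toTorus = ν.map toTorus := by
  have integral_mFourier (κ : Measure (Fin d → ℝ)) (m : Fin d → ℤ) :
      ∫ u, mFourier m u ∂κ.map toTorus = fourierStieltjes κ m := by
    rw [integral_map measurable_toTorus.aemeasurable
      (mFourier m).continuous.measurable.aestronglyMeasurable]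
    simp only [mFourier_toTorus, fourierStieltjes]
  refine ext_of_integral_mFourier_eq fun m ↦ ?_
  rw [integral_mFourier, integral_mFourier, h]

end TorusProjection

section PeriodicConvolution

variable {ι : Type*} {d : ℕ}

/-- `κ` is a periodic convolution `μ * γ`, in the convention that `γ` displaces `x` to `x - y`.
Testing against continuous `2π`-periodic functions determines `κ` only modulo `2π`. -/
def IsPeriodicConvolution (μ γ κ : Measure (Fin d → ℝ)) : Prop :=
  ∀ g : (Fin d → ℝ) → ℝ, Continuous g → IsPeriodic g →
    ∫ z, g z ∂κ = ∫ x, ∫ y, g (x - y) ∂γ ∂μ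

lemma map_sub_prod_map_toTorus (μ ν : Measure (ι → ℝ)) [SFinite μ] [SFinite ν] :
    ((μ.map toTorus).prod (ν.map toTorus)).map (fun p ↦ p.1 - p.2) =
      (μ.prod ν).map (fun p ↦ toTorus (p.1 - p.2)) := by
  rw [Measure.map_prod_map _ _ measurable_toTorus measurable_toTorus,
    Measure.map_map (by fun_prop) (measurable_toTorus.prodMap measurable_toTorus)]
  simp only [Function.comp_def, Prod.map, toTorus_sub]

lemma IsPeriodicConvolution.map_toTorus {μ γ κ : Measure (Fin d → ℝ)}
    [IsFiniteMeasure μ] [IsFiniteMeasure γ] [IsFiniteMeasure κ]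
    (h : IsPeriodicConvolution μ γ κ) :
    κ.map toTorus = ((μ.map toTorus).prod (γ.map toTorus)).map (fun p ↦ p.1 - p.2) := by
  rw [map_sub_prod_map_toTorus]
  refine ext_of_forall_integral_eq_of_IsFiniteMeasure fun f ↦ ?_
  have hint : Integrable (fun p ↦ f (toTorus (p.1 - p.2))) (μ.prod γ) :=
    (f.compContinuous ⟨_, continuous_toTorus_sub⟩).integrable _
  calc ∫ u, f u ∂κ.map toTorus
      = ∫ z, f (toTorus z) ∂κ :=
        integral_map measurable_toTorus.aemeasurable f.continuous.aestronglyMeasurable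
    _ = ∫ x, ∫ y, f (toTorus (x - y)) ∂γ ∂μ :=
        h _ (f.continuous.comp continuous_toTorus) (isPeriodic_comp_toTorus f)
    _ = ∫ p, f (toTorus (p.1 - p.2)) ∂μ.prod γ := (integral_prod _ hint).symm
    _ = ∫ u, f u ∂(μ.prod γ).map (fun p ↦ toTorus (p.1 - p.2)) :=
        (integral_map continuous_toTorus_sub.measurable.aemeasurable
          f.continuous.aestronglyMeasurable).symm

end PeriodicConvolution

section TorusDistance

variable {d : ℕ}

lemma rhoCircle_nonneg {s t : ℝ} (hs : s ∈ Set.Ioc (-π) π) (ht : t ∈ Set.Ioc (-π) π) :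
    0 ≤ rhoCircle s t := by
  have hlt : |s - t| < 2 * π := by
    rw [abs_lt]
    constructor <;> linarith [hs.1, hs.2, ht.1, ht.2]
  exact le_min (abs_nonneg _) (by linarith)

lemma rhoCircle_le_abs_sub_add (s t : ℝ) (k : ℤ) : rhoCircle s t ≤ |s - t + 2 * π * k| := by
  rcases eq_or_ne k 0 with rfl | hk
  · simp [rhoCircle]
  · have hk_abs : (1 : ℝ) ≤ |(k : ℝ)| := mod_cast Int.one_le_abs hk
    calc rhoCircle s t ≤ 2 * π - |s - t| := min_le_right _ _
      _ ≤ 2 * π * |(k : ℝ)| - |s - t| := by nlinarith [pi_pos]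
      _ = |2 * π * k| - |s - t| := by rw [abs_mul, abs_of_pos two_pi_pos]
      _ ≤ |s - t + 2 * π * k| := by
        rw [add_comm, ← sub_neg_eq_add, ← abs_neg (s - t)]
        exact abs_sub_abs_le_abs_sub _ _

lemma rhoTorus_le_of_toTorus_eq {x y z : Fin d → ℝ} (hx : x ∈ Qcube d) (hz : z ∈ Qcube d)
    (h : toTorus z = toTorus (x - y)) : rhoTorus x z ≤ √(∑ i, y i ^ 2) := by
  obtain ⟨k, hk⟩ := toTorus_eq_toTorus_iff.1 h
  refine sqrt_le_sqrt (Finset.sum_le_sum fun i _ ↦ ?_)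
  have hy : x i - z i + 2 * π * k i = y i := by rw [hk i, Pi.sub_apply]; ring
  rw [← sq_abs (y i), ← hy]
  exact pow_le_pow_left₀ (rhoCircle_nonneg (hx i) (hz i)) (rhoCircle_le_abs_sub_add _ _ _) 2

lemma measurable_rhoTorus : Measurable fun p : (Fin d → ℝ) × (Fin d → ℝ) ↦ rhoTorus p.1 p.2 := by
  unfold rhoTorus rhoCircle
  fun_prop

end TorusDistance

section WrappedShift

variable {d : ℕ} {μ ν κ : Measure (Fin d → ℝ)}

lemma IsCoupling.transportCost_le {α : Type*} [MeasurableSpace α] {c : α → α → ℝ}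
    {plan : Measure (α × α)} {μ ν : Measure α} (h : IsCoupling plan μ ν) :
    transportCost c μ ν ≤ ∫⁻ p, ENNReal.ofReal (c p.1 p.2) ∂plan :=
  iInf₂_le plan h

/-- The transport plan of the smoothing estimate: the point `x`, displaced by `-y`, is sent to the
representative of `x - y` in the cube `(-π, π]^d`. -/
def wrappedShift (p : (Fin d → ℝ) × (Fin d → ℝ)) : (Fin d → ℝ) × (Fin d → ℝ) :=
  (p.1, torusSection (toTorus (p.1 - p.2)))

lemma measurable_wrappedShift : Measurable (wrappedShift (d := d)) :=
  measurable_fst.prodMk (measurable_torusSection.comp continuous_toTorus_sub.measurable)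

lemma isCoupling_map_wrappedShift [SFinite μ] [IsProbabilityMeasure ν] (hκ : κ (Qcube d)ᶜ = 0)
    (h : κ.map toTorus = ((μ.map toTorus).prod (ν.map toTorus)).map (fun p ↦ p.1 - p.2)) :
    IsCoupling ((μ.prod ν).map wrappedShift) μ κ := by
  have hsection : torusSection ∘ toTorus =ᵐ[κ] id := by
    filter_upwards [show ∀ᵐ z ∂κ, z ∈ Qcube d from hκ] with z hz using torusSection_toTorus hz
  constructor
  · calc ((μ.prod ν).map wrappedShift).map Prod.fst
        = (μ.prod ν).map Prod.fst := Measure.map_map measurable_fst measurable_wrappedShift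
      _ = μ := by rw [Measure.map_fst_prod, measure_univ, one_smul]
  · calc ((μ.prod ν).map wrappedShift).map Prod.snd
        = (μ.prod ν).map (torusSection ∘ fun p ↦ toTorus (p.1 - p.2)) :=
          Measure.map_map measurable_snd measurable_wrappedShift
      _ = (κ.map toTorus).map torusSection := by
        rw [h, map_sub_prod_map_toTorus,
          Measure.map_map measurable_torusSection continuous_toTorus_sub.measurable]
      _ = κ := by
        rw [Measure.map_map measurable_torusSection measurable_toTorus,
          Measure.map_congr hsection, Measure.map_id]

lemma W1tilde_le_lintegral_sqrt_sum_sq [IsProbabilityMeasure μ] [IsProbabilityMeasure ν]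
    (hμ : μ (Qcube d)ᶜ = 0) (hκ : κ (Qcube d)ᶜ = 0)
    (h : κ.map toTorus = ((μ.map toTorus).prod (ν.map toTorus)).map (fun p ↦ p.1 - p.2)) :
    W1tilde μ κ ≤ ∫⁻ y, ENNReal.ofReal √(∑ i, y i ^ 2) ∂ν := by
  have hcube : ∀ᵐ p ∂μ.prod ν, p.1 ∈ Qcube d := Measure.quasiMeasurePreserving_fst.ae hμ
  calc W1tilde μ κ
      ≤ ∫⁻ q, ENNReal.ofReal (rhoTorus q.1 q.2) ∂(μ.prod ν).map wrappedShift :=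
        (isCoupling_map_wrappedShift hκ h).transportCost_le
    _ = ∫⁻ p, ENNReal.ofReal (rhoTorus (wrappedShift p).1 (wrappedShift p).2) ∂μ.prod ν :=
        lintegral_map measurable_rhoTorus.ennreal_ofReal measurable_wrappedShift
    _ ≤ ∫⁻ p, ENNReal.ofReal √(∑ i, p.2 i ^ 2) ∂μ.prod ν := by
        refine lintegral_mono_ae ?_
        filter_upwards [hcube] with p hp
        exact ENNReal.ofReal_le_ofReal (rhoTorus_le_of_toTorus_eq hp (torusSection_mem_Qcube _)
          (toTorus_torusSection _))
    _ = ∫⁻ y, ENNReal.ofReal √(∑ i, y i ^ 2) ∂ν :=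
        measurePreserving_snd.lintegral_comp
          (f := fun y : Fin d → ℝ ↦ ENNReal.ofReal √(∑ i, y i ^ 2)) (by fun_prop)

end WrappedShift

section Gaussian

variable {ι : Type*} [Fintype ι] {d : ℕ}

lemma lintegral_ofReal_sqrt_le {Ω : Type*} [MeasurableSpace Ω] {P : Measure Ω}
    [IsProbabilityMeasure P] {f : Ω → ℝ} (hf : Integrable f P) (hf_nonneg : 0 ≤ f) :
    ∫⁻ ω, ENNReal.ofReal √(f ω) ∂P ≤ ENNReal.ofReal √(∫ ω, f ω ∂P) := by
  have hsqrt : Integrable (fun ω ↦ √(f ω)) P := by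
    have hmemLp : MemLp (fun ω ↦ √(f ω)) 2 P := by
      rw [memLp_two_iff_integrable_sq
        (continuous_sqrt.comp_aestronglyMeasurable hf.aestronglyMeasurable)]
      simpa only [sq_sqrt (hf_nonneg _)] using hf
    exact hmemLp.integrable one_le_two
  rw [← ofReal_integral_eq_lintegral_ofReal hsqrt (ae_of_all _ fun _ ↦ sqrt_nonneg _)]
  exact ENNReal.ofReal_le_ofReal (strictConcaveOn_sqrt.concaveOn.le_map_integral
    continuous_sqrt.continuousOn isClosed_Ici (ae_of_all _ hf_nonneg) hf hsqrt)

/-- The centred Gaussian measure on `ℝ^ι` with covariance `v • 1`. The heat kernel at time `t` has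
`v = 2 * t`. -/
abbrev isotropicGaussian (ι : Type*) [Fintype ι] (v : ℝ≥0) : Measure (ι → ℝ) :=
  Measure.pi fun _ ↦ gaussianReal 0 v

lemma fourierStieltjes_pi (ν : Fin d → Measure ℝ) [∀ i, SigmaFinite (ν i)] (m : Fin d → ℤ) :
    fourierStieltjes (Measure.pi ν) m = ∏ i, charFun (ν i) (m i) := by
  have exp_eq_prod (x : Fin d → ℝ) : Complex.exp (Complex.I * ∑ i, (m i : ℂ) * (x i : ℂ)) =
      ∏ i, Complex.exp (((m i : ℝ) : ℂ) * (x i : ℂ) * Complex.I) := by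
    rw [mul_comm, Finset.sum_mul, Complex.exp_sum]
    rfl
  simp only [fourierStieltjes, exp_eq_prod, charFun_apply_real]
  exact integral_fintype_prod_eq_prod
    fun i (y : ℝ) ↦ Complex.exp (((m i : ℝ) : ℂ) * (y : ℂ) * Complex.I)

lemma fourierStieltjes_isotropicGaussian (v : ℝ≥0) (m : Fin d → ℤ) :
    fourierStieltjes (isotropicGaussian (Fin d) v) m =
      Complex.exp (-(((∑ i, (m i : ℝ) ^ 2) * (v / 2) : ℝ) : ℂ)) := by
  simp only [fourierStieltjes_pi, charFun_gaussianReal]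
  rw [← Complex.exp_sum, Finset.sum_mul, Complex.ofReal_sum, ← Finset.sum_neg_distrib]
  congr! 2 with i
  push_cast
  ring

lemma integral_sq_gaussianReal (v : ℝ≥0) : ∫ x, x ^ 2 ∂gaussianReal 0 v = v := by
  rw [← variance_fun_id_gaussianReal (μ := 0) (v := v),
    variance_of_integral_eq_zero aemeasurable_id' integral_id_gaussianReal]

lemma integrable_eval_sq_isotropicGaussian (v : ℝ≥0) (i : ι) :
    Integrable (fun y : ι → ℝ ↦ y i ^ 2) (isotropicGaussian ι v) :=
  integrable_comp_eval (μ := fun _ : ι ↦ gaussianReal 0 v) (i := i) (f := fun x : ℝ ↦ x ^ 2)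
    (memLp_id_gaussianReal 2).integrable_sq

lemma integral_sum_sq_isotropicGaussian (v : ℝ≥0) :
    ∫ y, ∑ i, y i ^ 2 ∂isotropicGaussian ι v = Fintype.card ι * v := by
  have integral_eval_sq (i : ι) : ∫ y : ι → ℝ, y i ^ 2 ∂isotropicGaussian ι v = v := by
    rw [← integral_sq_gaussianReal v]
    exact integral_comp_eval (μ := fun _ : ι ↦ gaussianReal 0 v) (i := i) (f := fun x : ℝ ↦ x ^ 2)
      (by fun_prop)
  rw [integral_finsetSum _ fun i _ ↦ integrable_eval_sq_isotropicGaussian v i]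
  simp only [integral_eval_sq, Finset.sum_const, Finset.card_univ, nsmul_eq_mul]

lemma lintegral_sqrt_sum_sq_isotropicGaussian_le (v : ℝ≥0) :
    ∫⁻ y, ENNReal.ofReal √(∑ i, y i ^ 2) ∂isotropicGaussian ι v ≤
      ENNReal.ofReal √(Fintype.card ι * v) := by
  rw [← integral_sum_sq_isotropicGaussian]
  exact lintegral_ofReal_sqrt_le
    (integrable_finsetSum _ fun i _ ↦ integrable_eval_sq_isotropicGaussian v i)
    fun y ↦ Finset.sum_nonneg fun i _ ↦ sq_nonneg (y i)

end Gaussian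

theorem W1tilde_heat_smoothing_general {d : ℕ} {t : ℝ} (ht : 0 ≤ t)
    {μ γ μt : Measure (Fin d → ℝ)} [IsProbabilityMeasure μ] [IsFiniteMeasure γ]
    [IsFiniteMeasure μt] (hμ : μ (Qcube d)ᶜ = 0)
    (hγft : ∀ m : Fin d → ℤ,
      fourierStieltjes γ m = Complex.exp (-(((∑ i, ((m i : ℝ)) ^ 2) * t : ℝ) : ℂ)))
    (hμt : μt (Qcube d)ᶜ = 0) (hconv : IsPeriodicConvolution μ γ μt) :
    W1tilde μ μt ≤ ENNReal.ofReal √(2 * d * t) := by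
  lift t to ℝ≥0 using ht
  have hγ : γ.map toTorus = (isotropicGaussian (Fin d) (2 * t)).map toTorus := by
    refine map_toTorus_eq_of_fourierStieltjes_eq fun m ↦ ?_
    rw [hγft, fourierStieltjes_isotropicGaussian, NNReal.coe_mul, NNReal.coe_ofNat,
      mul_div_cancel_left₀ _ two_ne_zero]
  calc W1tilde μ μt
      ≤ ∫⁻ y, ENNReal.ofReal √(∑ i, y i ^ 2) ∂isotropicGaussian (Fin d) (2 * t) :=
        W1tilde_le_lintegral_sqrt_sum_sq hμ hμt (hγ ▸ hconv.map_toTorus)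
    _ ≤ ENNReal.ofReal √(Fintype.card (Fin d) * (2 * t : ℝ≥0)) :=
        lintegral_sqrt_sum_sq_isotropicGaussian_le _
    _ = ENNReal.ofReal √(2 * d * t) := by
        rw [Fintype.card_fin, NNReal.coe_mul, NNReal.coe_ofNat, ← mul_assoc, mul_comm (d : ℝ)]

/-- Smoothing estimate: for any probability measure `μ` on `Q^d` and any `t > 0`,
the heat-kernel smoothed measure `μ_t = μ * γ_t` satisfies `W̃₁(μ, μ_t) ≤ √(2dt)`.
Here `γ` is the heat kernel measure `γ_t` (characterized by its Fourier–Stieltjes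
transform `e^{−|m|²t}`, with density `p_t`), and `μt` is characterized by
`∫ g dμ_t = ∫∫ g(x−y) p_t(y) dy dμ(x)` for all `2π`-periodic continuous `g`. -/
theorem W1tilde_heat_smoothing {d : ℕ} {t : ℝ} (ht : 0 < t)
    (μ : Measure (Fin d → ℝ)) [IsProbabilityMeasure μ] (hμ : μ (Qcube d)ᶜ = 0)
    (γ : Measure (Fin d → ℝ)) [IsProbabilityMeasure γ] (hγsupp : γ (Qcube d)ᶜ = 0)
    (hγft : ∀ m : Fin d → ℤ,
      fourierStieltjes γ m = Complex.exp (-(((∑ i, ((m i : ℝ)) ^ 2) * t : ℝ) : ℂ)))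
    (μt : Measure (Fin d → ℝ)) [IsProbabilityMeasure μt] (hμt : μt (Qcube d)ᶜ = 0)
    (hconv : ∀ g : (Fin d → ℝ) → ℝ, Continuous g → IsPeriodic g →
      ∫ z, g z ∂μt = ∫ x, ∫ y, g (x - y) ∂γ ∂μ) :
    W1tilde μ μt ≤ ENNReal.ofReal (Real.sqrt (2 * d * t)) := by
  exact W1tilde_heat_smoothing_general ht.le hμ hγft hμt hconv
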